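/- Let (λ_k, z_k, z̃_k, ε_k) be NE-HPE sequences for T with parameter σ, distance generating function w ∈ 𝒟_Z(m,M), and initial point z₀ ∈ Z, and set r_k := (1/λ_k)(∇w(z_{k−1}) − ∇w(z_k)). Assume that for some infinite index set 𝒦 ⊆ ℕ and some z̃ ∈ 𝒵 one has (r_k, ε_k) → (0,0) and z̃_k → z̃ along k ∈ 𝒦. Then 0 ∈ T(z̃) and z̃ ∈ Z. If, in addition, (dw)_{z_k}(z̃_k) → 0 along k ∈ 𝒦, then (dw)_{z_k}(z̃) → 0 as k → ∞ (over all k). -/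

import Mathlib

open RealInnerProductSpace Filter

/-- The dual (extended) seminorm of a seminorm `p`:
`‖v‖_* = sup { ⟪v, z⟫ : p z ≤ 1 }`, valued in `[-∞, ∞]`. -/
noncomputable def dualSN {E : Type*} [NormedAddCommGroup E] [InnerProductSpace ℝ E]
    (p : E → ℝ) (v : E) : EReal :=
  ⨆ z : {z : E // p z ≤ 1}, ((⟪v, z.1⟫ : ℝ) : EReal)

/-- The Bregman distance `(dw)_z(z') := w(z') - w(z) - ⟪∇w(z), z' - z⟫`
associated with `w`, whose gradient is `gw`. -/
noncomputable def breg {E : Type*} [NormedAddCommGroup E] [InnerProductSpace ℝ E]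
    (w : E → ℝ) (gw : E → E) (z z' : E) : ℝ :=
  w z' - w z - ⟪gw z, z' - z⟫

/-- `w ∈ 𝒟_Z(m, M)`: `w` is differentiable on `Z` with gradient `gw`, is `m`-strongly
convex with respect to the seminorm `p` on `Z`, and `gw` is `M`-Lipschitz from `p` to the
dual seminorm of `p` on `Z`. -/
structure IsDGF {E : Type*} [NormedAddCommGroup E] [InnerProductSpace ℝ E]
    [FiniteDimensional ℝ E]
    (Z : Set E) (p : Seminorm ℝ E) (m M : ℝ) (w : E → ℝ) (gw : E → E) : Prop where
  diff : ∀ z ∈ Z, HasGradientAt w (gw z) z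
  strconv : ∀ z ∈ Z, ∀ z' ∈ Z, m / 2 * (p (z - z'))^2 ≤ w z' - w z - ⟪gw z, z' - z⟫
  lips : ∀ z ∈ Z, ∀ z' ∈ Z, dualSN ⇑p (gw z - gw z') ≤ ((M * p (z - z') : ℝ) : EReal)

/-- A set-valued operator `T : E ⇉ E` is monotone. -/
def MonoOp {E : Type*} [NormedAddCommGroup E] [InnerProductSpace ℝ E]
    (T : E → Set E) : Prop :=
  ∀ z z' t t' : E, t ∈ T z → t' ∈ T z' → 0 ≤ ⟪z - z', t - t'⟫

/-- A set-valued operator `T : E ⇉ E` is maximal monotone. -/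
def MaxMonoOp {E : Type*} [NormedAddCommGroup E] [InnerProductSpace ℝ E]
    (T : E → Set E) : Prop :=
  MonoOp T ∧ ∀ T' : E → Set E, MonoOp T' → (∀ z, T z ⊆ T' z) → T' = T

/-- The ε-enlargement `T^[ε]` of a monotone operator `T`. -/
def epsEnl {E : Type*} [NormedAddCommGroup E] [InnerProductSpace ℝ E]
    (T : E → Set E) (ε : ℝ) (z : E) : Set E :=
  {t | ∀ z' t' : E, t' ∈ T z' → -ε ≤ ⟪t - t', z - z'⟫}

/-- NE-HPE sequences `(λ_k, z_k, z̃_k, ε_k)` for `T`, with parameter `σ`, distance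
generating function `w` (with gradient `gw`) and initial point `z_0 = zs 0 ∈ Z`. -/
structure NEHPE {E : Type*} [NormedAddCommGroup E] [InnerProductSpace ℝ E]
    (Z : Set E) (w : E → ℝ) (gw : E → E) (T : E → Set E) (σ : ℝ)
    (lam : ℕ → ℝ) (zs : ℕ → E) (zt : ℕ → E) (ε : ℕ → ℝ) : Prop where
  lam_pos : ∀ k, 1 ≤ k → 0 < lam k
  zs_mem : ∀ k, zs k ∈ Z
  zt_mem : ∀ k, 1 ≤ k → zt k ∈ Z
  eps_nonneg : ∀ k, 1 ≤ k → 0 ≤ ε k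
  incl : ∀ k, 1 ≤ k → (1 / lam k) • (gw (zs (k-1)) - gw (zs k)) ∈ epsEnl T (ε k) (zt k)
  err : ∀ k, 1 ≤ k →
    breg w gw (zs k) (zt k) + lam k * ε k ≤ σ * breg w gw (zs (k-1)) (zt k)

/-!
A zero `c` of `T` satisfies `(dw)_{z_k}(c) ≤ (dw)_{z_{k-1}}(c)`: expand both sides by the
three-point identity at `z̃_k`, and use the enlargement inequality together with the error
criterion. The limit `z̃` is such a zero because the relation `t ∈ T^[ε](z)` is closed in
`(ε, z, t)` and `T^[0] = T` for maximal monotone `T`. As the distances `(dw)_{z_k}(z̃)` decrease,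
it suffices that they vanish along `𝒦`, which follows from
`(dw)_{z_k}(z̃) ≤ (dw)_{z_k}(z̃_k) + M ‖z̃ - z_k‖ ‖z̃ - z̃_k‖`. Here `‖z̃ - z_k‖` is bounded by
strong convexity and monotonicity, and strong convexity at `z̃` gives
`‖z̃ - z̃_k‖² ≤ (2 / m) (dw)_{z̃}(z̃_k) → 0`.
-/

theorem tendsto_atTop_of_antitone_of_le_atTop {ι α : Type*} [Preorder ι] [TopologicalSpace α]
    [ConditionallyCompleteLinearOrder α] [OrderTopology α] [NoMinOrder α] {f : ι → α}
    {l : Filter ι} [l.NeBot] {a : α} (hf : Antitone f) (hl : l ≤ atTop)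
    (ha : Tendsto f l (nhds a)) : Tendsto f atTop (nhds a) := by
  rcases tendsto_atTop_of_antitone hf with hbot | ⟨b, hb⟩
  · exact absurd (hbot.mono_left hl) (not_tendsto_atBot_of_tendsto_nhds ha)
  · rwa [tendsto_nhds_unique ha (hb.mono_left hl)]

section

variable {E : Type*} [NormedAddCommGroup E] [InnerProductSpace ℝ E]
  {Z : Set E} {p : Seminorm ℝ E} {m M : ℝ} {w : E → ℝ} {gw : E → E} {T : E → Set E}

theorem inner_le_mul_of_dualSN_le_of_lt {v x : E} {C s : ℝ}
    (h : dualSN p v ≤ (C : EReal)) (hs : p x < s) : ⟪v, x⟫ ≤ C * s := by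
  have hs0 : 0 < s := (apply_nonneg p x).trans_lt hs
  have hball : p (s⁻¹ • x) ≤ 1 := by
    rw [map_smul_eq_mul, Real.norm_of_nonneg (inv_nonneg.2 hs0.le), inv_mul_le_one₀ hs0]
    exact hs.le
  have hC : ⟪v, s⁻¹ • x⟫ ≤ C := by
    exact_mod_cast (le_iSup (fun z : {z : E // p z ≤ 1} ↦ ((⟪v, z.1⟫ : ℝ) : EReal))
      ⟨s⁻¹ • x, hball⟩).trans h
  rwa [inner_smul_right, inv_mul_le_iff₀' hs0] at hC

-- Letting `s` decrease to `p x` also covers `p x = 0`, where `x` cannot be normalized.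
theorem inner_le_mul_of_dualSN_le {v : E} {C : ℝ} (h : dualSN p v ≤ (C : EReal)) (x : E) :
    ⟪v, x⟫ ≤ C * p x := by
  have hlim : Tendsto (fun s ↦ C * s) (nhdsWithin (p x) (Set.Ioi (p x))) (nhds (C * p x)) :=
    (tendsto_id.mono_left nhdsWithin_le_nhds).const_mul C
  exact ge_of_tendsto hlim
    (eventually_nhdsWithin_of_forall fun _ hs ↦ inner_le_mul_of_dualSN_le_of_lt h hs)

theorem breg_sub_breg (w : E → ℝ) (gw : E → E) (a b u c : E) :
    breg w gw a c - breg w gw b c =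
      breg w gw a u - breg w gw b u + ⟪gw a - gw b, u - c⟫ := by
  simp only [breg, inner_sub_left, inner_sub_right]
  ring

theorem breg_self (w : E → ℝ) (gw : E → E) (z : E) : breg w gw z z = 0 := by
  simp [breg]

theorem tendsto_breg_nhds_self {z : E} (hw : ContinuousAt w z) :
    Tendsto (breg w gw z) (nhds z) (nhds 0) := by
  have hcont : ContinuousAt (breg w gw z) z := by
    unfold breg
    fun_prop
  simpa only [breg_self] using hcont.tendsto

theorem breg_le_breg_add_mul {z u c : E} (hcu : 0 ≤ breg w gw c u)
    (hlip : dualSN p (gw c - gw z) ≤ ((M * p (c - z) : ℝ) : EReal)) :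
    breg w gw z c ≤ breg w gw z u + M * p (c - z) * p (c - u) := by
  have hinner := inner_le_mul_of_dualSN_le hlip (c - u)
  have hneg : ⟪gw z - gw c, u - c⟫ = ⟪gw c - gw z, c - u⟫ := by
    rw [← neg_sub (gw c), ← neg_sub c, inner_neg_neg]
  have hthree := breg_sub_breg w gw z c u c
  rw [breg_self, hneg] at hthree
  linarith

theorem seminorm_sub_le_sqrt_breg (hm : 0 < m) {z z' : E}
    (h : m / 2 * p (z - z') ^ 2 ≤ breg w gw z z') :
    p (z - z') ≤ √(breg w gw z z' / (m / 2)) := by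
  apply Real.le_sqrt_of_sq_le
  rwa [le_div_iff₀' (half_pos hm)]

theorem tendsto_seminorm_sub_of_tendsto {ι : Type*} {l : Filter ι} {u : ι → E} {c : E}
    (hm : 0 < m) (hw : ContinuousAt w c)
    (hconv : ∀ᶠ k in l, m / 2 * p (c - u k) ^ 2 ≤ breg w gw c (u k))
    (hu : Tendsto u l (nhds c)) : Tendsto (fun k ↦ p (c - u k)) l (nhds 0) := by
  have hsqrt : Tendsto (fun k ↦ √(breg w gw c (u k) / (m / 2))) l (nhds 0) := by
    simpa using (((tendsto_breg_nhds_self hw).comp hu).div_const (m / 2)).sqrt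
  exact squeeze_zero' (.of_forall fun _ ↦ apply_nonneg p _)
    (hconv.mono fun _ ↦ seminorm_sub_le_sqrt_breg hm) hsqrt

theorem tendsto_breg_of_tendsto {ι : Type*} {l : Filter ι} {z u : ι → E} {c : E} {B : ℝ}
    (hm : 0 < m) (hw : ContinuousAt w c)
    (hconv : ∀ᶠ k in l, m / 2 * p (c - u k) ^ 2 ≤ breg w gw c (u k))
    (hlip : ∀ᶠ k in l, dualSN p (gw c - gw (z k)) ≤ ((M * p (c - z k) : ℝ) : EReal))
    (hnonneg : ∀ᶠ k in l, 0 ≤ breg w gw (z k) c)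
    (hB : ∀ᶠ k in l, p (c - z k) ≤ B) (hu : Tendsto u l (nhds c))
    (hzu : Tendsto (fun k ↦ breg w gw (z k) (u k)) l (nhds 0)) :
    Tendsto (fun k ↦ breg w gw (z k) c) l (nhds 0) := by
  have hbound : Tendsto (fun k ↦ breg w gw (z k) (u k) + |M| * B * p (c - u k)) l (nhds 0) := by
    simpa using hzu.add ((tendsto_seminorm_sub_of_tendsto hm hw hconv hu).const_mul (|M| * B))
  refine squeeze_zero' hnonneg ?_ hbound
  filter_upwards [hconv, hlip, hB] with k hconvk hlipk hBk
  have hcu : 0 ≤ breg w gw c (u k) := le_trans (by positivity) hconvk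
  calc breg w gw (z k) c
      ≤ breg w gw (z k) (u k) + M * p (c - z k) * p (c - u k) := breg_le_breg_add_mul hcu hlipk
    _ ≤ breg w gw (z k) (u k) + |M| * B * p (c - u k) := by
        gcongr
        exact le_abs_self M

theorem mem_epsEnl_of_tendsto {ι : Type*} {l : Filter ι} [l.NeBot] {ε : ι → ℝ} {z t : ι → E}
    {ε₀ : ℝ} {z₀ t₀ : E} (hε : Tendsto ε l (nhds ε₀)) (hz : Tendsto z l (nhds z₀))
    (ht : Tendsto t l (nhds t₀)) (hmem : ∀ᶠ k in l, t k ∈ epsEnl T (ε k) (z k)) :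
    t₀ ∈ epsEnl T ε₀ z₀ := fun y s hs ↦
  le_of_tendsto_of_tendsto hε.neg ((ht.sub_const s).inner (hz.sub_const y))
    (hmem.mono fun _ hk ↦ hk y s hs)

-- Adjoining `(z, t)` to the graph of `T` preserves monotonicity, so `T` already contains it.
theorem MaxMonoOp.epsEnl_zero_subset (hT : MaxMonoOp T) (z : E) : epsEnl T 0 z ⊆ T z := by
  intro t ht
  have hrel : ∀ z' t', t' ∈ T z' → 0 ≤ ⟪z - z', t - t'⟫ := fun z' t' ht' ↦ by
    simpa only [neg_zero, real_inner_comm] using ht z' t' ht'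
  have hmono : MonoOp (fun x ↦ T x ∪ {s | x = z ∧ s = t}) := by
    rintro a b s s' (hs | ⟨rfl, rfl⟩) (hs' | ⟨rfl, rfl⟩)
    · exact hT.1 _ _ _ _ hs hs'
    · rw [← neg_sub b, ← neg_sub s', inner_neg_neg]
      exact hrel a s hs
    · exact hrel _ _ hs'
    · simp only [sub_self, inner_zero_left, le_refl]
  rw [← hT.2 _ hmono fun x ↦ Set.subset_union_left]
  exact Or.inr ⟨rfl, rfl⟩

namespace NEHPE

variable {σ : ℝ} {lam : ℕ → ℝ} {zs zt : ℕ → E} {ε : ℕ → ℝ} {z : E}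

theorem neg_mul_le_inner (h : NEHPE Z w gw T σ lam zs zt ε) (hz : 0 ∈ T z) (k : ℕ) :
    -(lam (k + 1) * ε (k + 1)) ≤ ⟪gw (zs k) - gw (zs (k + 1)), zt (k + 1) - z⟫ := by
  have hincl := h.incl (k + 1) k.succ_pos z 0 hz
  rw [sub_zero, real_inner_smul_left, one_div_mul_eq_div,
    le_div_iff₀' (h.lam_pos _ k.succ_pos)] at hincl
  rwa [← mul_neg]

theorem antitone_breg (h : NEHPE Z w gw T σ lam zs zt ε) (hσ : σ ≤ 1)
    (hbreg : ∀ z ∈ Z, ∀ z' ∈ Z, 0 ≤ breg w gw z z') (hz : 0 ∈ T z) :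
    Antitone fun k ↦ breg w gw (zs k) z := by
  refine antitone_nat_of_succ_le fun k ↦ ?_
  have herr : breg w gw (zs (k + 1)) (zt (k + 1)) + lam (k + 1) * ε (k + 1) ≤
      σ * breg w gw (zs k) (zt (k + 1)) := h.err (k + 1) k.succ_pos
  have hσle : σ * breg w gw (zs k) (zt (k + 1)) ≤ breg w gw (zs k) (zt (k + 1)) :=
    mul_le_of_le_one_left (hbreg _ (h.zs_mem k) _ (h.zt_mem _ k.succ_pos)) hσ
  linarith [breg_sub_breg w gw (zs k) (zs (k + 1)) (zt (k + 1)) z, h.neg_mul_le_inner hz k]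

theorem seminorm_sub_le (h : NEHPE Z w gw T σ lam zs zt ε) (hσ : σ ≤ 1) (hm : 0 < m)
    (hconv : ∀ z ∈ Z, ∀ z' ∈ Z, m / 2 * p (z - z') ^ 2 ≤ breg w gw z z')
    (hz : 0 ∈ T z) (hzZ : z ∈ Z) (k : ℕ) :
    p (z - zs k) ≤ √(breg w gw (zs 0) z / (m / 2)) := by
  have hanti := h.antitone_breg hσ
    (fun a ha b hb ↦ le_trans (by positivity) (hconv a ha b hb)) hz
  calc p (z - zs k) = p (zs k - z) := map_sub_rev p _ _
    _ ≤ √(breg w gw (zs k) z / (m / 2)) :=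
        seminorm_sub_le_sqrt_breg hm (hconv _ (h.zs_mem k) _ hzZ)
    _ ≤ √(breg w gw (zs 0) z / (m / 2)) := by
        gcongr
        exact hanti k.zero_le

end NEHPE

theorem stmt9_general (hm : 0 < m)
    -- `HasGradientAt w (gw z) z`, unfolded because that predicate presupposes a complete space.
    (hgrad : ∀ z ∈ Z, HasFDerivAt w (innerSL ℝ (gw z)) z)
    (hconv : ∀ z ∈ Z, ∀ z' ∈ Z, m / 2 * p (z - z') ^ 2 ≤ breg w gw z z')
    (hlip : ∀ z ∈ Z, ∀ z' ∈ Z, dualSN p (gw z - gw z') ≤ ((M * p (z - z') : ℝ) : EReal))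
    (hT : MaxMonoOp T) (hdom : ∀ z, (T z).Nonempty → z ∈ Z)
    {σ : ℝ} (hσ : σ ≤ 1) {lam : ℕ → ℝ} {zs zt : ℕ → E} {ε : ℕ → ℝ}
    (hseq : NEHPE Z w gw T σ lam zs zt ε)
    {r : ℕ → E} (hr : ∀ k, r k = (1 / lam k) • (gw (zs (k - 1)) - gw (zs k)))
    {l : Filter ℕ} [l.NeBot] (hl : l ≤ atTop) {ztil : E}
    (hrlim : Tendsto r l (nhds 0)) (hεlim : Tendsto ε l (nhds 0))
    (hztlim : Tendsto zt l (nhds ztil)) :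
    (0 ∈ T ztil ∧ ztil ∈ Z) ∧
      (Tendsto (fun k ↦ breg w gw (zs k) (zt k)) l (nhds 0) →
        Tendsto (fun k ↦ breg w gw (zs k) ztil) atTop (nhds 0)) := by
  have hpos : ∀ᶠ k in l, 1 ≤ k := hl (eventually_ge_atTop 1)
  have hzero : 0 ∈ T ztil := hT.epsEnl_zero_subset ztil <|
    mem_epsEnl_of_tendsto hεlim hztlim hrlim (hpos.mono fun k hk ↦ hr k ▸ hseq.incl k hk)
  have hZ : ztil ∈ Z := hdom ztil ⟨0, hzero⟩
  refine ⟨⟨hzero, hZ⟩, fun hzs ↦ ?_⟩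
  have hbreg : ∀ z ∈ Z, ∀ z' ∈ Z, 0 ≤ breg w gw z z' :=
    fun z hz z' hz' ↦ le_trans (by positivity) (hconv z hz z' hz')
  have hlim : Tendsto (fun k ↦ breg w gw (zs k) ztil) l (nhds 0) :=
    tendsto_breg_of_tendsto hm (hgrad ztil hZ).continuousAt
      (hpos.mono fun k hk ↦ hconv _ hZ _ (hseq.zt_mem k hk))
      (.of_forall fun k ↦ hlip _ hZ _ (hseq.zs_mem k))
      (.of_forall fun k ↦ hbreg _ (hseq.zs_mem k) _ hZ)
      (.of_forall fun k ↦ hseq.seminorm_sub_le hσ hm hconv hzero hZ k) hztlim hzs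
  exact tendsto_atTop_of_antitone_of_le_atTop (hseq.antitone_breg hσ hbreg hzero) hl hlim

end

/-- If the residuals vanish and z̃_k converges along an infinite index
set 𝒦, then the limit z̃ solves the inclusion and lies in Z; if moreover the Bregman
distances (dw)_{z_k}(z̃_k) vanish along 𝒦, then (dw)_{z_k}(z̃) → 0 over all k. -/
theorem stmt9
    {E : Type*} [NormedAddCommGroup E] [InnerProductSpace ℝ E] [FiniteDimensional ℝ E]
    (Z : Set E) (p : Seminorm ℝ E) (m M : ℝ) (hm : 0 < m) (hmM : m ≤ M)
    (w : E → ℝ) (gw : E → E) (hw : IsDGF Z p m M w gw)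
    (T : E → Set E) (hT : MaxMonoOp T)
    (hdom : ∀ z, (T z).Nonempty → z ∈ Z) (hsol : ∃ z, 0 ∈ T z)
    (σ : ℝ) (hσ0 : 0 ≤ σ) (hσ1 : σ ≤ 1)
    (lam : ℕ → ℝ) (zs zt : ℕ → E) (ε : ℕ → ℝ)
    (hseq : NEHPE Z w gw T σ lam zs zt ε)
    (r : ℕ → E) (hr : ∀ k, r k = (1 / lam k) • (gw (zs (k - 1)) - gw (zs k)))
    (K : Set ℕ) (hK : K.Infinite) (ztil : E)
    (hrlim : Tendsto r (atTop ⊓ Filter.principal K) (nhds 0))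
    (hεlim : Tendsto ε (atTop ⊓ Filter.principal K) (nhds 0))
    (hztlim : Tendsto zt (atTop ⊓ Filter.principal K) (nhds ztil)) :
    ((0 : E) ∈ T ztil ∧ ztil ∈ Z)
    ∧ (Tendsto (fun k => breg w gw (zs k) (zt k)) (atTop ⊓ Filter.principal K) (nhds 0) →
        Tendsto (fun k => breg w gw (zs k) ztil) atTop (nhds 0)) := by
  have : (atTop ⊓ Filter.principal K).NeBot :=
    frequently_mem_iff_neBot.1 (Nat.frequently_atTop_iff_infinite.2 hK)
  exact stmt9_general hm hw.diff hw.strconv hw.lips hT hdom hσ1 hseq hr inf_le_left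
    hrlim hεlim hztlim
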